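/- Let q > 0 be a real number and let x₁, x₂ be real numbers with x₁ > 2√q, x₂ > 2√q and x₁ ≠ x₂. Then the convergent double series identity holds: ∑_{n₁=0}^∞ ∑_{n₂=0}^∞ q^{n₁+n₂+1}·(2n₁+1)!·(2n₂+1)! / ((n₁+n₂+1)·(n₁!)²·(n₂!)²) · x₁^{−2n₁−2}·x₂^{−2n₂−2} + ∑_{n₁=1}^∞ ∑_{n₂=1}^∞ q^{n₁+n₂}·n₁·n₂·(2n₁)!·(2n₂)! / ((n₁+n₂)·(n₁!)²·(n₂!)²) · x₁^{−2n₁−1}·x₂^{−2n₂−1} = W₀₂(x₁,x₂;q). -/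

import Mathlib

/-- The genus-zero two-point function of the stationary GW theory of ℙ¹. -/
noncomputable def W02 (q x₁ x₂ : ℝ) : ℝ :=
  (x₁ * x₂ - 4 * q) /
      (2 * Real.sqrt (x₁ ^ 2 - 4 * q) * Real.sqrt (x₂ ^ 2 - 4 * q) * (x₁ - x₂) ^ 2) -
    1 / (2 * (x₁ - x₂) ^ 2)

/-- The even part of the genus-zero two-point series, indexed by `(n₁, n₂) ∈ ℕ × ℕ`. -/
noncomputable def evenTerm (q x₁ x₂ : ℝ) (p : ℕ × ℕ) : ℝ :=
  q ^ (p.1 + p.2 + 1) * (Nat.factorial (2 * p.1 + 1) : ℝ) * (Nat.factorial (2 * p.2 + 1) : ℝ) /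
    (((p.1 + p.2 + 1 : ℕ) : ℝ) * ((Nat.factorial p.1 : ℝ)) ^ 2 * ((Nat.factorial p.2 : ℝ)) ^ 2) /
    (x₁ ^ (2 * p.1 + 2) * x₂ ^ (2 * p.2 + 2))

/-- The odd part of the genus-zero two-point series; the summation over `n₁, n₂ ≥ 1`
is written by reindexing `nᵢ = pᵢ + 1` over `(p₁, p₂) ∈ ℕ × ℕ`. -/
noncomputable def oddTerm (q x₁ x₂ : ℝ) (p : ℕ × ℕ) : ℝ :=
  q ^ ((p.1 + 1) + (p.2 + 1)) * ((p.1 + 1 : ℕ) : ℝ) * ((p.2 + 1 : ℕ) : ℝ) *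
      (Nat.factorial (2 * (p.1 + 1)) : ℝ) * (Nat.factorial (2 * (p.2 + 1)) : ℝ) /
    ((((p.1 + 1) + (p.2 + 1) : ℕ) : ℝ) * ((Nat.factorial (p.1 + 1) : ℝ)) ^ 2 *
      ((Nat.factorial (p.2 + 1) : ℝ)) ^ 2) /
    (x₁ ^ (2 * (p.1 + 1) + 1) * x₂ ^ (2 * (p.2 + 1) + 1))

/-!
Differentiating in `q` removes the denominators `n₁ + n₂ + 1` and `n₁ + n₂`, after which both double
series factor as products of the one-variable series
`∑ (2n+1)! / (n!)² · tⁿ / x²ⁿ⁺² = |x| / √(x² - 4t) ^ 3`, a case of the binomial series. The two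
derivatives add up to `(x₁x₂ + 4t) / (√(x₁² - 4t) √(x₂² - 4t)) ^ 3 = ∂W₀₂(x₁, x₂; t) / ∂t`, so
integrating from `0` to `q` gives the identity because `W₀₂(x₁, x₂; 0) = 0`.
-/

section RealSeries

lemma hasSum_mul_prod {ι κ : Type*} {f : ι → ℝ} {g : κ → ℝ} {a b : ℝ} (hf : HasSum f a)
    (hg : HasSum g b) : HasSum (fun p : ι × κ => f p.1 * g p.2) (a * b) :=
  hf.mul hg (summable_mul_of_summable_norm hf.summable.norm hg.summable.norm)

lemma abs_le_abs_of_mem_uIcc_zero {q t : ℝ} (ht : t ∈ Set.uIcc 0 q) : |t| ≤ |q| := by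
  simpa only [sub_zero] using Set.abs_sub_left_of_mem_uIcc ht

lemma hasSum_integral_of_hasSum_mul_pow {ι : Type*} [Countable ι] {a : ι → ℝ} {d : ι → ℕ}
    {f : ℝ → ℝ} {q : ℝ} (h : ∀ t ∈ Set.uIcc 0 q, HasSum (fun i => a i * t ^ d i) (f t)) :
    HasSum (fun i => a i * (q ^ (d i + 1) / (d i + 1 : ℝ))) (∫ t in (0 : ℝ)..q, f t) := by
  have hbound (i : ι) (t : ℝ) (ht : t ∈ Set.uIcc 0 q) : ‖a i * t ^ d i‖ ≤ ‖a i * q ^ d i‖ := by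
    rw [norm_mul, norm_mul, norm_pow, norm_pow]
    gcongr ‖a i‖ * ?_ ^ d i
    exact abs_le_abs_of_mem_uIcc_zero ht
  have hsum : HasSum (fun i => ∫ t in (0 : ℝ)..q, a i * t ^ d i) (∫ t in (0 : ℝ)..q, f t) := by
    refine intervalIntegral.hasSum_integral_of_dominated_convergence
      (fun i _ => ‖a i * q ^ d i‖) (fun i => ?_) (fun i => ?_) ?_ ?_ ?_
    · exact (by fun_prop : Continuous fun t : ℝ => a i * t ^ d i).aestronglyMeasurable
    · exact .of_forall fun t ht => hbound i t (Set.uIoc_subset_uIcc ht)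
    · exact .of_forall fun _ _ => (h q Set.right_mem_uIcc).summable.norm
    · exact intervalIntegrable_const
    · exact .of_forall fun t ht => h t (Set.uIoc_subset_uIcc ht)
  simpa only [intervalIntegral.integral_const_mul, integral_pow, ne_eq, Nat.add_eq_zero_iff,
    one_ne_zero, and_false, not_false_eq_true, zero_pow, sub_zero] using hsum

end RealSeries

section GeneratingFunction

open scoped Nat

/-- The coefficient `(2n+1)! / (n!)²` of `yⁿ` in the expansion of `(1 - 4y) ^ (-3/2)`; both parts of
the two-point series are built from products of two of these. -/
noncomputable def twoPointCoeff (n : ℕ) : ℝ := (2 * n + 1)! / (n ! : ℝ) ^ 2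

lemma twoPointCoeff_succ (n : ℕ) :
    (n + 1) * twoPointCoeff (n + 1) = (4 * n + 6) * twoPointCoeff n := by
  have hn : (n ! : ℝ) ≠ 0 := by positivity
  rw [twoPointCoeff, twoPointCoeff, show 2 * (n + 1) + 1 = 2 * n + 1 + 1 + 1 by ring,
    Nat.factorial_succ (2 * n + 1 + 1), Nat.factorial_succ (2 * n + 1), Nat.factorial_succ n]
  push_cast
  field_simp
  ring

lemma mul_factorial_div_factorial_sq_succ (n : ℕ) :
    ((n + 1 : ℕ) : ℝ) * (2 * (n + 1))! / ((n + 1)! : ℝ) ^ 2 = 2 * twoPointCoeff n := by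
  have hn : (n ! : ℝ) ≠ 0 := by positivity
  rw [twoPointCoeff, show 2 * (n + 1) = 2 * n + 1 + 1 by ring, Nat.factorial_succ (2 * n + 1),
    Nat.factorial_succ n]
  push_cast
  field_simp
  ring

lemma factorial_mul_choose_add_sub_one (a : ℝ) (n : ℕ) :
    n ! * Ring.choose (a + n - 1) n = (ascPochhammer ℝ n).eval a := by
  rw [Ring.choose, show a + n - 1 - n + 1 = a by ring, ← nsmul_eq_mul,
    Ring.factorial_nsmul_multichoose_eq_ascPochhammer, Polynomial.ascPochhammer_smeval_eq_eval]

lemma ascPochhammer_eval_three_halves (n : ℕ) :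
    (ascPochhammer ℝ n).eval (3 / 2) * 4 ^ n = n ! * twoPointCoeff n := by
  induction n with
  | zero => simp [twoPointCoeff]
  | succ n ih =>
    rw [ascPochhammer_succ_eval, Nat.factorial_succ]
    push_cast
    linear_combination (4 * n + 6 : ℝ) * ih - (n ! : ℝ) * twoPointCoeff_succ n

lemma choose_three_halves_mul_four_pow (n : ℕ) :
    Ring.choose (3 / 2 + n - 1 : ℝ) n * 4 ^ n = twoPointCoeff n := by
  refine mul_left_cancel₀ (by positivity : (n ! : ℝ) ≠ 0) ?_
  rw [← mul_assoc, factorial_mul_choose_add_sub_one, ascPochhammer_eval_three_halves]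

lemma rpow_three_halves_eq_sqrt_pow_three {y : ℝ} (hy : 0 ≤ y) : y ^ (3 / 2 : ℝ) = √y ^ 3 := by
  rw [Real.sqrt_eq_rpow, ← Real.rpow_mul_natCast hy]
  norm_num

lemma hasSum_twoPointCoeff_mul_pow {y : ℝ} (hy : |4 * y| < 1) :
    HasSum (fun n => twoPointCoeff n * y ^ n) (1 / √(1 - 4 * y) ^ 3) := by
  have hball : 4 * y ∈ Metric.eball (0 : ℝ) 1 := by
    rwa [Metric.mem_eball, edist_zero_right, ← ofReal_norm, ENNReal.ofReal_lt_one,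
      Real.norm_eq_abs]
  have h := (Real.one_div_one_sub_rpow_hasFPowerSeriesOnBall_zero (3 / 2)).hasSum hball
  rw [zero_add, rpow_three_halves_eq_sqrt_pow_three (by linarith [le_abs_self (4 * y)])] at h
  convert! h using 1
  ext n
  rw [FormalMultilinearSeries.ofScalars_apply_eq, smul_eq_mul, mul_pow, ← mul_assoc,
    choose_three_halves_mul_four_pow]

lemma hasSum_twoPointCoeff_mul_pow_div {x t : ℝ} (ht : 4 * |t| < x ^ 2) :
    HasSum (fun n => twoPointCoeff n * t ^ n / x ^ (2 * n + 2)) (|x| / √(x ^ 2 - 4 * t) ^ 3) := by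
  have hx : 0 < x ^ 2 := by linarith [abs_nonneg t]
  have hsmall : |4 * (t / x ^ 2)| < 1 := by
    rwa [← mul_div_assoc, abs_div, abs_of_pos hx, div_lt_one hx, abs_mul, abs_of_pos four_pos]
  have hsqrt : √(1 - 4 * (t / x ^ 2)) = √(x ^ 2 - 4 * t) / |x| := by
    rw [← Real.sqrt_sq_eq_abs, ← Real.sqrt_div' _ hx.le]
    congr 1
    rw [sub_div, div_self hx.ne', mul_div_assoc]
  have h := (hasSum_twoPointCoeff_mul_pow hsmall).div_const (x ^ 2)
  convert! h using 1
  · ext n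
    rw [div_pow, pow_add, pow_mul, mul_div_assoc, mul_div_assoc, div_div]
  · rw [hsqrt, ← sq_abs x]
    field_simp

end GeneratingFunction

section TwoPointSeries

open scoped Nat

variable {q t x₁ x₂ : ℝ}

/-- The coefficient of `t ^ (n₁ + n₂)`, `p = (n₁, n₂)`, in the double series obtained by
differentiating the even part of the two-point series. -/
noncomputable def pairCoeff (x₁ x₂ : ℝ) (p : ℕ × ℕ) : ℝ :=
  twoPointCoeff p.1 * twoPointCoeff p.2 / (x₁ ^ (2 * p.1 + 2) * x₂ ^ (2 * p.2 + 2))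

lemma evenTerm_eq_pairCoeff_mul (q x₁ x₂ : ℝ) (p : ℕ × ℕ) :
    evenTerm q x₁ x₂ p =
      pairCoeff x₁ x₂ p * (q ^ (p.1 + p.2 + 1) / ((p.1 + p.2 : ℕ) + 1 : ℝ)) := by
  simp only [evenTerm, pairCoeff, twoPointCoeff]
  field_simp
  push_cast
  ring

lemma oddTerm_eq_pairCoeff_mul (q x₁ x₂ : ℝ) (p : ℕ × ℕ) :
    oddTerm q x₁ x₂ p =
      4 / (x₁ * x₂) * pairCoeff x₁ x₂ p *
        (q ^ (p.1 + p.2 + 1 + 1) / ((p.1 + p.2 + 1 : ℕ) + 1 : ℝ)) := by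
  have hsplit : oddTerm q x₁ x₂ p =
      ((p.1 + 1 : ℕ) : ℝ) * (2 * (p.1 + 1))! / ((p.1 + 1)! : ℝ) ^ 2 *
        (((p.2 + 1 : ℕ) : ℝ) * (2 * (p.2 + 1))! / ((p.2 + 1)! : ℝ) ^ 2) *
          (q ^ (p.1 + p.2 + 1 + 1) / ((p.1 + p.2 + 1 : ℕ) + 1 : ℝ)) /
            (x₁ ^ (2 * (p.1 + 1) + 1) * x₂ ^ (2 * (p.2 + 1) + 1)) := by
    rw [oddTerm, show p.1 + 1 + (p.2 + 1) = p.1 + p.2 + 1 + 1 by ring]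
    push_cast
    field_simp
  rw [hsplit, mul_factorial_div_factorial_sq_succ, mul_factorial_div_factorial_sq_succ, pairCoeff]
  ring

lemma pairCoeff_mul_pow_add (x₁ x₂ t : ℝ) (p : ℕ × ℕ) :
    pairCoeff x₁ x₂ p * t ^ (p.1 + p.2) =
      twoPointCoeff p.1 * t ^ p.1 / x₁ ^ (2 * p.1 + 2) *
        (twoPointCoeff p.2 * t ^ p.2 / x₂ ^ (2 * p.2 + 2)) := by
  rw [pairCoeff, pow_add t, div_mul_div_comm, div_mul_eq_mul_div, mul_mul_mul_comm]

lemma hasSum_pairCoeff_mul_pow (h₁ : 4 * |t| < x₁ ^ 2) (h₂ : 4 * |t| < x₂ ^ 2) :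
    HasSum (fun p => pairCoeff x₁ x₂ p * t ^ (p.1 + p.2))
      (|x₁ * x₂| / (√(x₁ ^ 2 - 4 * t) * √(x₂ ^ 2 - 4 * t)) ^ 3) := by
  simp only [pairCoeff_mul_pow_add]
  rw [abs_mul, mul_pow, ← div_mul_div_comm]
  exact (hasSum_mul_prod (hasSum_twoPointCoeff_mul_pow_div h₁)
    (hasSum_twoPointCoeff_mul_pow_div h₂) :)

lemma hasSum_evenTerm (h₁ : 4 * |q| < x₁ ^ 2) (h₂ : 4 * |q| < x₂ ^ 2) (hx : 0 < x₁ * x₂) :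
    HasSum (evenTerm q x₁ x₂)
      (∫ t in (0 : ℝ)..q, x₁ * x₂ / (√(x₁ ^ 2 - 4 * t) * √(x₂ ^ 2 - 4 * t)) ^ 3) := by
  rw [funext (evenTerm_eq_pairCoeff_mul q x₁ x₂)]
  refine hasSum_integral_of_hasSum_mul_pow (d := fun p : ℕ × ℕ => p.1 + p.2) fun t ht => ?_
  have htq := abs_le_abs_of_mem_uIcc_zero ht
  rw [← abs_of_pos hx]
  exact hasSum_pairCoeff_mul_pow (by linarith) (by linarith)

lemma hasSum_oddTerm (h₁ : 4 * |q| < x₁ ^ 2) (h₂ : 4 * |q| < x₂ ^ 2) (hx : 0 < x₁ * x₂) :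
    HasSum (oddTerm q x₁ x₂)
      (∫ t in (0 : ℝ)..q, 4 * t / (√(x₁ ^ 2 - 4 * t) * √(x₂ ^ 2 - 4 * t)) ^ 3) := by
  rw [funext (oddTerm_eq_pairCoeff_mul q x₁ x₂)]
  refine hasSum_integral_of_hasSum_mul_pow (d := fun p : ℕ × ℕ => p.1 + p.2 + 1) fun t ht => ?_
  have htq := abs_le_abs_of_mem_uIcc_zero ht
  have h : HasSum (fun p => 4 * t / (x₁ * x₂) * (pairCoeff x₁ x₂ p * t ^ (p.1 + p.2)))
      (4 * t / (x₁ * x₂) * (|x₁ * x₂| / (√(x₁ ^ 2 - 4 * t) * √(x₂ ^ 2 - 4 * t)) ^ 3)) :=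
    (hasSum_pairCoeff_mul_pow (by linarith) (by linarith)).mul_left _
  rw [abs_of_pos hx, ← mul_div_assoc, div_mul_cancel₀ _ hx.ne'] at h
  convert! h using 2 with p
  ring

end TwoPointSeries

section TwoPointFunction

variable {q t x₁ x₂ : ℝ}

lemma W02_zero_left (hx : 0 < x₁ * x₂) : W02 0 x₁ x₂ = 0 := by
  have hroots : √(x₁ ^ 2) * √(x₂ ^ 2) = x₁ * x₂ := by
    rw [Real.sqrt_sq_eq_abs, Real.sqrt_sq_eq_abs, ← abs_mul, abs_of_pos hx]
  rw [W02, mul_zero, sub_zero, sub_zero, sub_zero, mul_assoc 2, hroots, mul_right_comm,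
    mul_comm _ (x₁ * x₂), div_mul_cancel_left₀ hx.ne', one_div, sub_self]

lemma hasDerivAt_sqrt_sub_four_mul {c : ℝ} (ht : 4 * t < c) :
    HasDerivAt (fun s => √(c - 4 * s)) (-2 / √(c - 4 * t)) t := by
  have hlin : HasDerivAt (fun s : ℝ => c - 4 * s) (-4) t := by
    simpa using ((hasDerivAt_id t).const_mul 4).const_sub c
  convert! hlin.sqrt (by linarith) using 1
  ring

lemma hasDerivAt_W02 (hne : x₁ ≠ x₂) (h₁ : 4 * t < x₁ ^ 2) (h₂ : 4 * t < x₂ ^ 2) :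
    HasDerivAt (fun s => W02 s x₁ x₂)
      ((x₁ * x₂ + 4 * t) / (√(x₁ ^ 2 - 4 * t) * √(x₂ ^ 2 - 4 * t)) ^ 3) t := by
  have hnum : HasDerivAt (fun s : ℝ => x₁ * x₂ - 4 * s) (-4) t := by
    simpa using ((hasDerivAt_id t).const_mul 4).const_sub (x₁ * x₂)
  have ha_sq := Real.sq_sqrt (by linarith : 0 ≤ x₁ ^ 2 - 4 * t)
  have hb_sq := Real.sq_sqrt (by linarith : 0 ≤ x₂ ^ 2 - 4 * t)
  have h := (hnum.fun_div ((((hasDerivAt_sqrt_sub_four_mul h₁).const_mul 2).fun_mul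
    (hasDerivAt_sqrt_sub_four_mul h₂)).mul_const ((x₁ - x₂) ^ 2)) (by positivity)).sub_const
      (1 / (2 * (x₁ - x₂) ^ 2))
  convert! h using 1
  field_simp
  rw [ha_sq, hb_sq]
  ring

lemma intervalIntegrable_div_sqrt_mul_sqrt_pow_three {f : ℝ → ℝ} (hf : Continuous f)
    (h₁ : 4 * |q| < x₁ ^ 2) (h₂ : 4 * |q| < x₂ ^ 2) :
    IntervalIntegrable (fun t => f t / (√(x₁ ^ 2 - 4 * t) * √(x₂ ^ 2 - 4 * t)) ^ 3)
      MeasureTheory.volume 0 q := by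
  refine ContinuousOn.intervalIntegrable (hf.continuousOn.div (by fun_prop) fun t ht => ?_)
  have htq := (le_abs_self t).trans (abs_le_abs_of_mem_uIcc_zero ht)
  have hpos {x : ℝ} (h : 4 * |q| < x ^ 2) : 0 < √(x ^ 2 - 4 * t) :=
    Real.sqrt_pos.2 (by linarith)
  exact (pow_pos (mul_pos (hpos h₁) (hpos h₂)) 3).ne'

lemma integral_eq_W02 (h₁ : 4 * |q| < x₁ ^ 2) (h₂ : 4 * |q| < x₂ ^ 2) (hx : 0 < x₁ * x₂)
    (hne : x₁ ≠ x₂) :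
    ∫ t in (0 : ℝ)..q, (x₁ * x₂ + 4 * t) / (√(x₁ ^ 2 - 4 * t) * √(x₂ ^ 2 - 4 * t)) ^ 3 =
      W02 q x₁ x₂ := by
  have hderiv (t : ℝ) (ht : t ∈ Set.uIcc 0 q) := by
    have htq := (le_abs_self t).trans (abs_le_abs_of_mem_uIcc_zero ht)
    exact hasDerivAt_W02 (t := t) hne (by linarith) (by linarith)
  rw [intervalIntegral.integral_eq_sub_of_hasDerivAt hderiv
    (intervalIntegrable_div_sqrt_mul_sqrt_pow_three (by fun_prop) h₁ h₂), W02_zero_left hx,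
    sub_zero]

end TwoPointFunction

lemma four_mul_abs_lt_sq_of_two_mul_sqrt_lt {q x : ℝ} (hq : 0 ≤ q) (h : 2 * √q < x) :
    4 * |q| < x ^ 2 :=
  calc 4 * |q| = (2 * √q) ^ 2 := by rw [abs_of_nonneg hq, mul_pow, Real.sq_sqrt hq]; norm_num
    _ < x ^ 2 := by gcongr

theorem two_point_series_eq_W02_general (q x₁ x₂ : ℝ) (h₁ : 4 * |q| < x₁ ^ 2)
    (h₂ : 4 * |q| < x₂ ^ 2) (hx : 0 < x₁ * x₂) (hne : x₁ ≠ x₂) :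
    Summable (evenTerm q x₁ x₂) ∧ Summable (oddTerm q x₁ x₂) ∧
      (∑' p : ℕ × ℕ, evenTerm q x₁ x₂ p) + (∑' p : ℕ × ℕ, oddTerm q x₁ x₂ p) =
        W02 q x₁ x₂ := by
  have heven := hasSum_evenTerm h₁ h₂ hx
  have hodd := hasSum_oddTerm h₁ h₂ hx
  refine ⟨heven.summable, hodd.summable, ?_⟩
  rw [heven.tsum_eq, hodd.tsum_eq, ← integral_eq_W02 h₁ h₂ hx hne,
    ← intervalIntegral.integral_add
      (intervalIntegrable_div_sqrt_mul_sqrt_pow_three continuous_const h₁ h₂)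
      (intervalIntegrable_div_sqrt_mul_sqrt_pow_three (by fun_prop) h₁ h₂)]
  simp only [add_div]

/-- The genus-zero two-point series of stationary GW invariants of ℙ¹ sums to `W₀₂(x₁,x₂;q)`. -/
theorem two_point_series_eq_W02 (q x₁ x₂ : ℝ) (hq : 0 < q)
    (h₁ : 2 * Real.sqrt q < x₁) (h₂ : 2 * Real.sqrt q < x₂) (hne : x₁ ≠ x₂) :
    Summable (evenTerm q x₁ x₂) ∧ Summable (oddTerm q x₁ x₂) ∧
      (∑' p : ℕ × ℕ, evenTerm q x₁ x₂ p) + (∑' p : ℕ × ℕ, oddTerm q x₁ x₂ p) =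
        W02 q x₁ x₂ := by
  have hpos {x : ℝ} (h : 2 * √q < x) : 0 < x := h.trans_le' (by positivity)
  exact two_point_series_eq_W02_general q x₁ x₂
    (four_mul_abs_lt_sq_of_two_mul_sqrt_lt hq.le h₁)
    (four_mul_abs_lt_sq_of_two_mul_sqrt_lt hq.le h₂) (mul_pos (hpos h₁) (hpos h₂)) hne
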